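/- (Proposition 11, fourth-moment bounds on the derivative of the MMSE.) For every n ≥ 1, every snr > 0, and every random vector X in ℝⁿ with Tr(E[(X Xᵀ)²]) < ∞, Tr(E[(Cov(X|Y_snr))²]) ≤ min( Tr(E[((X − √snr·Z)(X − √snr·Z)ᵀ)²])/(1+snr)⁴ , Tr(E[(E[X Xᵀ|Y_snr])²]) ); moreover Tr(E[(E[X Xᵀ|Y_snr])²]) ≤ Tr(E[(X Xᵀ)²]). -/

import Mathlib

open MeasureTheory ProbabilityTheory Real Matrix

noncomputable section

/-- The observation `Y_snr = √snr · X + Z` as a random vector in `ℝⁿ` (modeled as `Fin n → ℝ`). -/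
def obs {Ω : Type*} {n : ℕ} (X Z : Ω → Fin n → ℝ) (snr : ℝ) : Ω → Fin n → ℝ :=
  fun ω i => Real.sqrt snr * X ω i + Z ω i

/-- The σ-algebra generated by the observation `Y_snr`. -/
def obsSigma {Ω : Type*} [MeasurableSpace Ω] {n : ℕ} (X Z : Ω → Fin n → ℝ) (snr : ℝ) :
    MeasurableSpace Ω :=
  MeasurableSpace.comap (obs X Z snr) inferInstance

/-- Componentwise conditional expectation of a random vector given a sub-σ-algebra `m`. -/
def ceVec {Ω : Type*} {n : ℕ} (m : MeasurableSpace Ω) [MeasurableSpace Ω] (μ : Measure Ω)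
    (V : Ω → Fin n → ℝ) : Ω → Fin n → ℝ :=
  fun ω i => (μ[fun ω' => V ω' i | m]) ω

/-- Entrywise conditional expectation of a random matrix given a sub-σ-algebra `m`. -/
def ceMat {Ω : Type*} {n : ℕ} (m : MeasurableSpace Ω) [MeasurableSpace Ω] (μ : Measure Ω)
    (M : Ω → Matrix (Fin n) (Fin n) ℝ) : Ω → Matrix (Fin n) (Fin n) ℝ :=
  fun ω => Matrix.of fun i j => (μ[fun ω' => M ω' i j | m]) ω

/-- Conditional covariance matrix `Cov(V|m) = E[V Vᵀ|m] − E[V|m]·E[V|m]ᵀ` (entrywise). -/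
def covMat {Ω : Type*} {n : ℕ} (m : MeasurableSpace Ω) [MeasurableSpace Ω] (μ : Measure Ω)
    (V : Ω → Fin n → ℝ) : Ω → Matrix (Fin n) (Fin n) ℝ :=
  fun ω => ceMat m μ (fun ω' => Matrix.vecMulVec (V ω') (V ω')) ω
    - Matrix.vecMulVec (ceVec m μ V ω) (ceVec m μ V ω)

/-- Entrywise expectation of a random matrix. -/
def expMat {Ω : Type*} [MeasurableSpace Ω] {n : ℕ} (μ : Measure Ω)
    (M : Ω → Matrix (Fin n) (Fin n) ℝ) : Matrix (Fin n) (Fin n) ℝ :=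
  Matrix.of fun i j => ∫ ω, M ω i j ∂μ

/-- `Tr(E[M])` for a random matrix `M` (expectation entrywise). -/
def trExp {Ω : Type*} [MeasurableSpace Ω] {n : ℕ} (μ : Measure Ω)
    (M : Ω → Matrix (Fin n) (Fin n) ℝ) : ℝ :=
  Matrix.trace (expMat μ M)

/-!
The conditional covariance is the conditional second moment of the residual `V - E[V|Y]`, hence
almost surely positive semidefinite, and it lies below `E[V Vᵀ|Y]` in the Loewner order. The map
`A ↦ Tr(A²)` is monotone on positive semidefinite matrices, and `Tr(E[M|Y]²) ≤ Tr(E[M²|Y])` for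
symmetric `M` by Jensen's inequality in each entry; so
`Tr E[Cov(V|Y)²] ≤ Tr E[E[V Vᵀ|Y]²] ≤ Tr E[(V Vᵀ)²]`. Applied to `V = X` this gives two of the three
bounds. For the third, `(1 + snr) X = (X - √snr Z) + √snr Y`, and a `Y`-measurable shift does not
change the residual, so `(1 + snr)² Cov(X|Y) = Cov(X - √snr Z|Y)`; apply the chain to
`V = X - √snr Z`.
-/

section MatrixTrace

lemma convex_posSemidef {ι : Type*} : Convex ℝ {A : Matrix ι ι ℝ | A.PosSemidef} :=
  fun _ hA _ hB _ _ ha hb _ => (hA.smul ha).add (hB.smul hb)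

lemma isClosed_posSemidef {ι : Type*} : IsClosed {A : Matrix ι ι ℝ | A.PosSemidef} := by
  simp only [PosSemidef, IsHermitian, Set.ofPred_and, Set.ofPred_forall]
  refine .inter (isClosed_eq (by fun_prop) continuous_id) (isClosed_iInter fun x => ?_)
  refine isClosed_le continuous_const ?_
  unfold Finsupp.sum
  fun_prop

variable {ι 𝕜 : Type*} [Fintype ι] [RCLike 𝕜]

open scoped ComplexOrder MatrixOrder in
lemma trace_mul_nonneg_of_posSemidef {A B : Matrix ι ι 𝕜} (hA : A.PosSemidef)
    (hB : B.PosSemidef) : 0 ≤ (A * B).trace := by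
  classical
  obtain ⟨C, rfl⟩ := CStarAlgebra.nonneg_iff_eq_star_mul_self.mp hB.nonneg
  rw [← Matrix.mul_assoc, trace_mul_comm, ← Matrix.mul_assoc]
  exact (hA.mul_mul_conjTranspose_same C).trace_nonneg

open scoped ComplexOrder MatrixOrder in
lemma trace_sq_le_trace_sq_of_le [DecidableEq ι] {A B : Matrix ι ι 𝕜} (hA : 0 ≤ A) (hAB : A ≤ B) :
    (A ^ 2).trace ≤ (B ^ 2).trace := by
  have hsum : (A + B).PosSemidef := (add_nonneg hA (hA.trans hAB)).posSemidef
  have hprod : 0 ≤ ((B - A) * (A + B)).trace := trace_mul_nonneg_of_posSemidef hAB hsum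
  have hfactor : ((B - A) * (A + B)).trace = (B ^ 2).trace - (A ^ 2).trace := by
    rw [sub_mul, mul_add, mul_add, trace_sub, trace_add, trace_add, trace_mul_comm B A, sq, sq]
    ring
  exact sub_nonneg.1 (hfactor ▸ hprod)

lemma trace_vecMulVec_self_sq {R : Type*} [CommSemiring R] [DecidableEq ι] (v : ι → R) :
    (vecMulVec v v ^ 2).trace = (v ⬝ᵥ v) ^ 2 := by
  rw [sq, vecMulVec_mul_vecMulVec, vecMulVec_smul, trace_smul, trace_vecMulVec, smul_eq_mul, sq]

lemma trace_sq_eq_sum_sq_of_isSymm {R : Type*} [CommSemiring R] [DecidableEq ι] {A : Matrix ι ι R}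
    (hA : A.IsSymm) : (A ^ 2).trace = ∑ i, ∑ j, A i j ^ 2 := by
  simp only [trace, diag_apply, sq, mul_apply]
  exact Finset.sum_congr rfl fun i _ => Finset.sum_congr rfl fun j _ => by rw [hA.apply i j]

lemma sq_norm_le_dotProduct_self (v : ι → ℝ) : ‖v‖ ^ 2 ≤ v ⬝ᵥ v := by
  have hcoord (i : ι) : |v i| ≤ √(v ⬝ᵥ v) := by
    refine Real.abs_le_sqrt ((sq (v i)).trans_le ?_)
    exact Finset.single_le_sum (f := fun j => v j * v j) (fun j _ => mul_self_nonneg (v j))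
      (Finset.mem_univ i)
  exact (Real.le_sqrt (norm_nonneg v)
    (Finset.sum_nonneg fun i _ => mul_self_nonneg (v i))).1
    ((pi_norm_le_iff_of_nonneg (Real.sqrt_nonneg _)).2 hcoord)

end MatrixTrace

section CondExp

variable {Ω : Type*} {m m₀ : MeasurableSpace Ω} {μ : Measure[m₀] Ω}

lemma condExp_sub_condExp_mul_sub_condExp (hm : m ≤ m₀) [IsFiniteMeasure μ]
    {f g : Ω → ℝ} (hf : MemLp f 2 μ) (hg : MemLp g 2 μ) :
    μ[(f - μ[f | m]) * (g - μ[g | m]) | m] =ᵐ[μ] μ[f * g | m] - μ[f | m] * μ[g | m] := by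
  have hf' : MemLp (μ[f | m]) 2 μ := hf.condExp one_le_two
  have hg' : MemLp (μ[g | m]) 2 μ := hg.condExp one_le_two
  have hcentered : μ[f - μ[f | m] | m] =ᵐ[μ] 0 := by
    filter_upwards [condExp_sub (hf.integrable one_le_two) integrable_condExp m] with ω hω
    rw [hω, Pi.sub_apply, condExp_of_stronglyMeasurable hm stronglyMeasurable_condExp
      integrable_condExp, sub_self, Pi.zero_apply]
  have hsplit : (f - μ[f | m]) * (g - μ[g | m]) =
      f * g - μ[f | m] * g - (f - μ[f | m]) * μ[g | m] := by ring
  have hfg' := (hf.sub hf').integrable_mul hg'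
  rw [hsplit]
  filter_upwards [hcentered,
    condExp_sub ((hf.integrable_mul hg).sub (hf'.integrable_mul hg)) hfg' m,
    condExp_sub (hf.integrable_mul hg) (hf'.integrable_mul hg) m,
    condExp_mul_of_stronglyMeasurable_left stronglyMeasurable_condExp (hf'.integrable_mul hg)
      (hg.integrable one_le_two),
    condExp_mul_of_stronglyMeasurable_right stronglyMeasurable_condExp hfg'
      ((hf.sub hf').integrable one_le_two)] with ω h0 hsub₁ hsub₂ hleft hright
  simp [hsub₁, hsub₂, hleft, hright, h0]

lemma sq_condExp_le_condExp_sq (hm : m ≤ m₀) [SigmaFinite (μ.trim hm)] {f : Ω → ℝ}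
    (hf : Integrable f μ) (hf2 : Integrable (fun ω => f ω ^ 2) μ) :
    ∀ᵐ ω ∂μ, (μ[f | m]) ω ^ 2 ≤ (μ[fun ω => f ω ^ 2 | m]) ω :=
  even_two.convexOn_pow.map_condExp_le_univ hm (continuous_pow 2).lowerSemicontinuous hf hf2

instance holderTriple_four_four_two : ENNReal.HolderTriple 4 4 2 where
  inv_add_inv_eq_inv := by
    rw [← two_mul, ← ENNReal.toReal_eq_toReal_iff' (by finiteness) (by finiteness)]
    norm_num

end CondExp

section Moments

variable {Ω : Type*} [MeasurableSpace Ω] {μ : Measure Ω} {ι : Type*} [Fintype ι]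

lemma memLp_vecMulVec_apply {p q r : ENNReal} [ENNReal.HolderTriple p q r] {U V : Ω → ι → ℝ}
    (hU : MemLp U p μ) (hV : MemLp V q μ) (i j : ι) :
    MemLp (fun ω => vecMulVec (U ω) (V ω) i j) r μ :=
  (hV.eval j).mul' (hU.eval i)

lemma integrable_sq_apply [DecidableEq ι] {M : Ω → Matrix ι ι ℝ}
    (hM : ∀ i j, MemLp (fun ω => M ω i j) 2 μ) (i j : ι) :
    Integrable (fun ω => (M ω ^ 2) i j) μ := by
  simp only [sq, mul_apply]
  exact integrable_finsetSum _ fun k _ => (hM i k).integrable_mul (hM k j)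

lemma memLp_four_of_integrable_trace_vecMulVec_sq [DecidableEq ι] {V : Ω → ι → ℝ}
    (hV : AEStronglyMeasurable V μ)
    (hint : Integrable (fun ω => (vecMulVec (V ω) (V ω) ^ 2).trace) μ) : MemLp V 4 μ := by
  have hpow : Integrable (fun ω => ‖V ω‖ ^ 4) μ := by
    refine hint.mono' (hV.norm.pow 4) (ae_of_all _ fun ω => ?_)
    rw [trace_vecMulVec_self_sq, Real.norm_of_nonneg (by positivity)]
    calc ‖V ω‖ ^ 4 = (‖V ω‖ ^ 2) ^ 2 := by ring
      _ ≤ (V ω ⬝ᵥ V ω) ^ 2 := by gcongr; exact sq_norm_le_dotProduct_self (V ω)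
  rw [← integrable_norm_rpow_iff hV (by norm_num) (by norm_num)]
  have hfour : (4 : ENNReal).toReal = (4 : ℕ) := by norm_num
  simpa only [hfour, Real.rpow_natCast] using hpow

lemma memLp_of_map_eq_pi_gaussianReal {Z : Ω → ι → ℝ} (hZ : Measurable Z) {p : ENNReal}
    (hp : p ≠ ⊤) {a : ι → ℝ} {v : ι → NNReal}
    (hlaw : μ.map Z = Measure.pi fun i => gaussianReal (a i) (v i)) :
    MemLp Z p μ := by
  refine memLp_pi_iff.2 fun i => ?_
  have hlaw_i : MeasurePreserving (fun ω => Z ω i) μ (gaussianReal (a i) (v i)) :=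
    (measurePreserving_eval _ i).comp ⟨hZ, hlaw⟩
  exact (memLp_id_gaussianReal' p hp).comp_measurePreserving hlaw_i

end Moments

section ExpectedTrace

variable {Ω : Type*} [MeasurableSpace Ω] {μ : Measure Ω} {n : ℕ}
  {M N : Ω → Matrix (Fin n) (Fin n) ℝ}

lemma trExp_eq_sum (M : Ω → Matrix (Fin n) (Fin n) ℝ) : trExp μ M = ∑ i, ∫ ω, M ω i i ∂μ := rfl

lemma trExp_congr_ae (h : M =ᵐ[μ] N) : trExp μ M = trExp μ N := by
  rw [trExp_eq_sum, trExp_eq_sum]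
  exact Finset.sum_congr rfl fun i _ => integral_congr_ae (h.mono fun _ hω => congrFun₂ hω i i)

lemma trExp_smul (c : ℝ) (M : Ω → Matrix (Fin n) (Fin n) ℝ) :
    trExp μ (fun ω => c • M ω) = c * trExp μ M := by
  simp only [trExp_eq_sum, Matrix.smul_apply, smul_eq_mul, integral_const_mul, Finset.mul_sum]

lemma trExp_eq_integral_trace (hM : ∀ i, Integrable (fun ω => M ω i i) μ) :
    trExp μ M = ∫ ω, (M ω).trace ∂μ := by
  rw [trExp_eq_sum]
  exact (integral_finsetSum _ fun i _ => hM i).symm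

lemma integrable_trace (hM : ∀ i, Integrable (fun ω => M ω i i) μ) :
    Integrable (fun ω => (M ω).trace) μ :=
  integrable_finsetSum _ fun i _ => hM i

lemma trExp_mono_ae (hM : ∀ i, Integrable (fun ω => M ω i i) μ)
    (hN : ∀ i, Integrable (fun ω => N ω i i) μ) (h : ∀ᵐ ω ∂μ, (M ω).trace ≤ (N ω).trace) :
    trExp μ M ≤ trExp μ N := by
  rw [trExp_eq_integral_trace hM, trExp_eq_integral_trace hN]
  exact integral_mono_ae (integrable_trace hM) (integrable_trace hN) h

end ExpectedTrace

section CondSecondMoment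

variable {Ω : Type*} {m m₀ : MeasurableSpace Ω} {μ : Measure[m₀] Ω} {n : ℕ}

lemma ceVec_ae_eq_condExp {V : Ω → Fin n → ℝ} (hV : Integrable V μ) :
    ceVec m μ V =ᵐ[μ] μ[V | m] := by
  filter_upwards [ae_all_iff.2 fun i =>
    (ContinuousLinearMap.proj (R := ℝ) (φ := fun _ : Fin n => ℝ) i).comp_condExp_comm (m := m) hV]
    with ω hω
  exact funext fun i => (hω i).symm

lemma ceMat_congr_ae {M N : Ω → Matrix (Fin n) (Fin n) ℝ} (h : M =ᵐ[μ] N) :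
    ceMat m μ M =ᵐ[μ] ceMat m μ N := by
  have hentry (i j : Fin n) : μ[fun ω => M ω i j | m] =ᵐ[μ] μ[fun ω => N ω i j | m] :=
    condExp_congr_ae (h.mono fun ω hω => congrFun₂ hω i j)
  filter_upwards [ae_all_iff.2 fun i => ae_all_iff.2 (hentry i)] with ω hω
  exact Matrix.ext hω

lemma ceMat_ae_eq_of_condExp {M : Ω → Matrix (Fin n) (Fin n) ℝ}
    (hM : ∀ i j, Integrable (fun ω => M ω i j) μ) :
    ceMat m μ M =ᵐ[μ] fun ω => of ((μ[fun ω' => of.symm (M ω') | m]) ω) := by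
  have hint : Integrable (fun ω => of.symm (M ω)) μ :=
    Integrable.of_eval fun i => Integrable.of_eval (hM i)
  let entry (i j : Fin n) : (Fin n → Fin n → ℝ) →L[ℝ] ℝ := .proj j ∘L .proj i
  filter_upwards [ae_all_iff.2 fun i => ae_all_iff.2 fun j =>
    (entry i j).comp_condExp_comm (m := m) hint] with ω hω
  exact Matrix.ext fun i j => (hω i j).symm

lemma posSemidef_ceMat (hm : m ≤ m₀) [SigmaFinite (μ.trim hm)]
    {M : Ω → Matrix (Fin n) (Fin n) ℝ} (hM : ∀ i j, Integrable (fun ω => M ω i j) μ)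
    (hpos : ∀ᵐ ω ∂μ, (M ω).PosSemidef) : ∀ᵐ ω ∂μ, (ceMat m μ M ω).PosSemidef := by
  have hint : Integrable (fun ω => of.symm (M ω)) μ :=
    Integrable.of_eval fun i => Integrable.of_eval (hM i)
  have hconvex : Convex ℝ {A : Fin n → Fin n → ℝ | (of A).PosSemidef} := convex_posSemidef
  have hclosed : IsClosed {A : Fin n → Fin n → ℝ | (of A).PosSemidef} := isClosed_posSemidef
  filter_upwards [ceMat_ae_eq_of_condExp hM, hconvex.condExp_mem hm hint hclosed hpos]
    with ω heq hω
  exact heq ▸ hω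

lemma trExp_ceMat (hm : m ≤ m₀) [SigmaFinite (μ.trim hm)] (M : Ω → Matrix (Fin n) (Fin n) ℝ) :
    trExp μ (ceMat m μ M) = trExp μ M := by
  rw [trExp_eq_sum, trExp_eq_sum]
  exact Finset.sum_congr rfl fun _ _ => integral_condExp hm

lemma memLp_ceMat {p : ENNReal} (hp : 1 ≤ p) {M : Ω → Matrix (Fin n) (Fin n) ℝ}
    (hM : ∀ i j, MemLp (fun ω => M ω i j) p μ) (i j : Fin n) :
    MemLp (fun ω => ceMat m μ M ω i j) p μ :=
  (hM i j).condExp hp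

lemma memLp_ceVec {p : ENNReal} (hp : 1 ≤ p) {V : Ω → Fin n → ℝ} (hV : MemLp V p μ) :
    MemLp (ceVec m μ V) p μ :=
  memLp_pi_iff.2 fun i => (hV.eval i).condExp hp

lemma isSymm_ceMat {M : Ω → Matrix (Fin n) (Fin n) ℝ} (hM : ∀ ω, (M ω).IsSymm) (ω : Ω) :
    (ceMat m μ M ω).IsSymm :=
  IsSymm.ext fun i j => by simp only [ceMat, of_apply, (hM _).apply i j]

lemma trace_sq_ceMat_le (hm : m ≤ m₀) [IsFiniteMeasure μ]
    {M : Ω → Matrix (Fin n) (Fin n) ℝ} (hM : ∀ i j, MemLp (fun ω => M ω i j) 2 μ)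
    (hsymm : ∀ ω, (M ω).IsSymm) :
    ∀ᵐ ω ∂μ, (ceMat m μ M ω ^ 2).trace ≤ (ceMat m μ (fun ω => M ω ^ 2) ω).trace := by
  have hsq_apply (i : Fin n) :
      (fun ω => (M ω ^ 2) i i) = ∑ j, fun ω => M ω i j ^ 2 := by
    ext ω
    rw [sq, mul_apply, Finset.sum_apply]
    exact Finset.sum_congr rfl fun j _ => by rw [(hsymm ω).apply i j, sq]
  filter_upwards [ae_all_iff.2 fun i => ae_all_iff.2 fun j =>
      sq_condExp_le_condExp_sq hm ((hM i j).integrable one_le_two) (hM i j).integrable_sq,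
    ae_all_iff.2 fun i => condExp_finsetSum (s := Finset.univ)
      (fun j _ => (hM i j).integrable_sq) m] with ω hjensen hsum
  rw [trace_sq_eq_sum_sq_of_isSymm (isSymm_ceMat hsymm ω)]
  refine Finset.sum_le_sum fun i _ => ?_
  calc ∑ j, ceMat m μ M ω i j ^ 2
      ≤ ∑ j, (μ[fun ω' => M ω' i j ^ 2 | m]) ω := Finset.sum_le_sum fun j _ => hjensen i j
    _ = (μ[fun ω' => (M ω' ^ 2) i i | m]) ω := by rw [hsq_apply, hsum, Finset.sum_apply]

lemma trExp_sq_ceMat_le (hm : m ≤ m₀) [IsFiniteMeasure μ]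
    {M : Ω → Matrix (Fin n) (Fin n) ℝ} (hM : ∀ i j, MemLp (fun ω => M ω i j) 2 μ)
    (hsymm : ∀ ω, (M ω).IsSymm) :
    trExp μ (fun ω => ceMat m μ M ω ^ 2) ≤ trExp μ (fun ω => M ω ^ 2) := by
  rw [← trExp_ceMat hm fun ω => M ω ^ 2]
  exact trExp_mono_ae (fun i => integrable_sq_apply (memLp_ceMat one_le_two hM) i i)
    (fun i => integrable_condExp) (trace_sq_ceMat_le hm hM hsymm)

end CondSecondMoment

section CondCovariance

variable {Ω : Type*} {m m₀ : MeasurableSpace Ω} {μ : Measure[m₀] Ω} {n : ℕ} {V W : Ω → Fin n → ℝ}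

lemma covMat_ae_eq_ceMat_residual (hm : m ≤ m₀) [IsFiniteMeasure μ] (hV : MemLp V 2 μ) :
    covMat m μ V =ᵐ[μ]
      ceMat m μ fun ω => vecMulVec (V ω - ceVec m μ V ω) (V ω - ceVec m μ V ω) := by
  filter_upwards [ae_all_iff.2 fun i => ae_all_iff.2 fun j =>
    condExp_sub_condExp_mul_sub_condExp hm (hV.eval i) (hV.eval j)] with ω hω
  exact Matrix.ext fun i j => (hω i j).symm

lemma covMat_apply (V : Ω → Fin n → ℝ) (ω : Ω) (i j : Fin n) :
    covMat m μ V ω i j = (μ[fun ω' => V ω' i * V ω' j | m]) ω -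
      (μ[fun ω' => V ω' i | m]) ω * (μ[fun ω' => V ω' j | m]) ω := rfl

lemma covMat_smul (c : ℝ) (V : Ω → Fin n → ℝ) :
    covMat m μ (c • V) =ᵐ[μ] c ^ 2 • covMat m μ V := by
  have hmean (i : Fin n) : μ[fun ω => (c • V) ω i | m] =ᵐ[μ] c • μ[fun ω => V ω i | m] :=
    condExp_smul c (fun ω => V ω i) m
  have hsecond (i j : Fin n) : μ[fun ω => (c • V) ω i * (c • V) ω j | m] =ᵐ[μ]
      c ^ 2 • μ[fun ω => V ω i * V ω j | m] := by
    convert condExp_smul (c ^ 2) (fun ω => V ω i * V ω j) m using 2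
    ext ω
    simp only [Pi.smul_apply, smul_eq_mul]
    ring
  filter_upwards [ae_all_iff.2 hmean, ae_all_iff.2 fun i => ae_all_iff.2 (hsecond i)] with ω h₁ h₂
  ext i j
  rw [Pi.smul_apply, Matrix.smul_apply, covMat_apply, covMat_apply, h₁, h₁, h₂]
  simp only [Pi.smul_apply, smul_eq_mul]
  ring

lemma add_sub_ceVec_add_of_stronglyMeasurable (hm : m ≤ m₀) [SigmaFinite (μ.trim hm)]
    (hV : Integrable V μ) (hW : Integrable W μ) (hWm : StronglyMeasurable[m] W) :
    (V + W) - ceVec m μ (V + W) =ᵐ[μ] V - ceVec m μ V := by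
  filter_upwards [ceVec_ae_eq_condExp (m := m) hV, ceVec_ae_eq_condExp (m := m) (hV.add hW),
    condExp_add hV hW m] with ω hceV hceVW hadd
  simp [hceV, hceVW, hadd, condExp_of_stronglyMeasurable hm hWm hW]

lemma covMat_add_of_stronglyMeasurable (hm : m ≤ m₀) [IsFiniteMeasure μ] (hV : MemLp V 2 μ)
    (hW : MemLp W 2 μ) (hWm : StronglyMeasurable[m] W) :
    covMat m μ (V + W) =ᵐ[μ] covMat m μ V := by
  have hresidual := add_sub_ceVec_add_of_stronglyMeasurable hm
    (hV.integrable one_le_two) (hW.integrable one_le_two) hWm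
  refine (covMat_ae_eq_ceMat_residual hm (hV.add hW)).trans <| .trans ?_
    (covMat_ae_eq_ceMat_residual hm hV).symm
  exact ceMat_congr_ae (hresidual.fun_comp fun v => vecMulVec v v)

lemma posSemidef_covMat (hm : m ≤ m₀) [IsFiniteMeasure μ] (hV : MemLp V 2 μ) :
    ∀ᵐ ω ∂μ, (covMat m μ V ω).PosSemidef := by
  have hres : MemLp (V - ceVec m μ V) 2 μ := hV.sub (memLp_ceVec one_le_two hV)
  have hpos := posSemidef_ceMat hm
    (fun i j => memLp_one_iff_integrable.1 (memLp_vecMulVec_apply hres hres i j))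
    (ae_of_all μ fun ω => posSemidef_vecMulVec_self_star ((V - ceVec m μ V) ω))
  filter_upwards [covMat_ae_eq_ceMat_residual hm hV, hpos] with ω heq hω
  exact heq ▸ hω

lemma memLp_covMat (hV : MemLp V 4 μ) (i j : Fin n) :
    MemLp (fun ω => covMat m μ V ω i j) 2 μ :=
  have hce : MemLp (ceVec m μ V) 4 μ := memLp_ceVec (by norm_num) hV
  (memLp_ceMat one_le_two (memLp_vecMulVec_apply hV hV) i j).sub (memLp_vecMulVec_apply hce hce i j)

open scoped MatrixOrder in
lemma trExp_sq_covMat_le (hm : m ≤ m₀) [IsFiniteMeasure μ] (hV : MemLp V 4 μ) :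
    trExp μ (fun ω => covMat m μ V ω ^ 2) ≤
      trExp μ (fun ω => ceMat m μ (fun ω' => vecMulVec (V ω') (V ω')) ω ^ 2) := by
  have hce (i j : Fin n) := memLp_ceMat (m := m) one_le_two (memLp_vecMulVec_apply hV hV) i j
  refine trExp_mono_ae (fun i => integrable_sq_apply (memLp_covMat hV) i i)
    (fun i => integrable_sq_apply hce i i) ?_
  filter_upwards [posSemidef_covMat hm (hV.mono_exponent (by norm_num))] with ω hpos
  refine trace_sq_le_trace_sq_of_le hpos.nonneg ?_
  exact sub_le_self _ (posSemidef_vecMulVec_self_star (ceVec m μ V ω)).nonneg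

lemma trExp_sq_covMat_le_trExp_sq (hm : m ≤ m₀) [IsFiniteMeasure μ] (hV : MemLp V 4 μ) :
    trExp μ (fun ω => covMat m μ V ω ^ 2) ≤ trExp μ (fun ω => vecMulVec (V ω) (V ω) ^ 2) :=
  (trExp_sq_covMat_le hm hV).trans <|
    trExp_sq_ceMat_le hm (memLp_vecMulVec_apply hV hV) fun _ => transpose_vecMulVec _ _

end CondCovariance

section AdditiveNoiseChannel

lemma one_add_snr_smul_eq_sub_add_obs {Ω : Type*} {n : ℕ} {snr : ℝ} (hsnr : 0 ≤ snr)
    (X Z : Ω → Fin n → ℝ) :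
    (1 + snr) • X = (X - √snr • Z) + √snr • obs X Z snr := by
  ext ω i
  simp only [obs, Pi.smul_apply, Pi.add_apply, Pi.sub_apply, smul_eq_mul]
  linear_combination (-X ω i) * Real.mul_self_sqrt hsnr

variable {Ω : Type*} [MeasurableSpace Ω] {μ : Measure Ω} {n : ℕ} {X Z : Ω → Fin n → ℝ} {snr : ℝ}

lemma stronglyMeasurable_obs : StronglyMeasurable[obsSigma X Z snr] (obs X Z snr) :=
  (comap_measurable (obs X Z snr)).stronglyMeasurable

lemma one_add_snr_sq_smul_covMat [IsFiniteMeasure μ] (hobs : Measurable (obs X Z snr))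
    (hX : MemLp X 2 μ) (hZ : MemLp Z 2 μ) (hsnr : 0 ≤ snr) :
    (1 + snr) ^ 2 • covMat (obsSigma X Z snr) μ X =ᵐ[μ]
      covMat (obsSigma X Z snr) μ (X - √snr • Z) := by
  have hY : MemLp (obs X Z snr) 2 μ := (hX.const_smul √snr).add hZ
  refine (covMat_smul (1 + snr) X).symm.trans ?_
  rw [one_add_snr_smul_eq_sub_add_obs hsnr X Z]
  exact covMat_add_of_stronglyMeasurable hobs.comap_le (hX.sub (hZ.const_smul √snr))
    (hY.const_smul √snr) (stronglyMeasurable_obs.const_smul √snr)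

lemma one_add_snr_pow_four_mul_trExp_sq_covMat [IsFiniteMeasure μ] (hobs : Measurable (obs X Z snr))
    (hX : MemLp X 2 μ) (hZ : MemLp Z 2 μ) (hsnr : 0 ≤ snr) :
    (1 + snr) ^ 4 * trExp μ (fun ω => covMat (obsSigma X Z snr) μ X ω ^ 2) =
      trExp μ (fun ω => covMat (obsSigma X Z snr) μ (X - √snr • Z) ω ^ 2) := by
  rw [← trExp_smul]
  refine trExp_congr_ae ?_
  filter_upwards [one_add_snr_sq_smul_covMat hobs hX hZ hsnr] with ω hω
  rw [← hω, Pi.smul_apply, smul_pow, ← pow_mul]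

theorem derivative_mmse_fourth_moment_bound_general [IsFiniteMeasure μ]
    (hobs : Measurable (obs X Z snr)) (hX : MemLp X 4 μ) (hZ : MemLp Z 4 μ) (hsnr : 0 ≤ snr) :
    trExp μ (fun ω => covMat (obsSigma X Z snr) μ X ω ^ 2) ≤
      min (trExp μ (fun ω => vecMulVec (X ω - √snr • Z ω) (X ω - √snr • Z ω) ^ 2) / (1 + snr) ^ 4)
        (trExp μ (fun ω =>
          ceMat (obsSigma X Z snr) μ (fun ω' => vecMulVec (X ω') (X ω')) ω ^ 2)) ∧
    trExp μ (fun ω => ceMat (obsSigma X Z snr) μ (fun ω' => vecMulVec (X ω') (X ω')) ω ^ 2) ≤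
      trExp μ (fun ω => vecMulVec (X ω) (X ω) ^ 2) := by
  have hm := hobs.comap_le
  refine ⟨le_min ?_ (trExp_sq_covMat_le hm hX),
    trExp_sq_ceMat_le hm (memLp_vecMulVec_apply hX hX) fun _ => transpose_vecMulVec _ _⟩
  rw [le_div_iff₀' (by positivity), one_add_snr_pow_four_mul_trExp_sq_covMat hobs
    (hX.mono_exponent (by norm_num)) (hZ.mono_exponent (by norm_num)) hsnr]
  exact trExp_sq_covMat_le_trExp_sq hm (hX.sub (hZ.const_smul √snr))

end AdditiveNoiseChannel

/-- **Proposition 11 (fourth-moment bounds on the derivative of the MMSE).**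
If `Tr(E[(XXᵀ)²]) < ∞` then `Tr(E[(Cov(X|Y))²])` is bounded by the minimum of
`Tr(E[((X−√snr·Z)(X−√snr·Z)ᵀ)²])/(1+snr)⁴` and `Tr(E[(E[XXᵀ|Y])²])`, and moreover
`Tr(E[(E[XXᵀ|Y])²]) ≤ Tr(E[(XXᵀ)²])`. -/
theorem derivative_mmse_fourth_moment_bound {Ω : Type*} [MeasurableSpace Ω] (μ : Measure Ω) [IsProbabilityMeasure μ]
    (n : ℕ) (hn : 1 ≤ n) (X Z : Ω → Fin n → ℝ)
    (hX : Measurable X) (hZ : Measurable Z)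
    (hZlaw : Measure.map Z μ = Measure.pi fun _ : Fin n => gaussianReal 0 1)
    (hindep : IndepFun X Z μ)
    (hX2 : Integrable (fun ω => ∑ i, (X ω i) ^ 2) μ)
    (snr : ℝ) (hsnr : 0 < snr)
    (hX4 : Integrable (fun ω => Matrix.trace ((Matrix.vecMulVec (X ω) (X ω)) ^ 2)) μ) :
    trExp μ (fun ω => (covMat (obsSigma X Z snr) μ X ω) ^ 2) ≤
      min ((trExp μ (fun ω =>
              (Matrix.vecMulVec (fun i => X ω i - Real.sqrt snr * Z ω i)
                (fun i => X ω i - Real.sqrt snr * Z ω i)) ^ 2)) / (1 + snr) ^ 4)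
          (trExp μ (fun ω =>
              (ceMat (obsSigma X Z snr) μ (fun ω' => Matrix.vecMulVec (X ω') (X ω')) ω) ^ 2)) ∧
    trExp μ (fun ω =>
        (ceMat (obsSigma X Z snr) μ (fun ω' => Matrix.vecMulVec (X ω') (X ω')) ω) ^ 2) ≤
      trExp μ (fun ω => (Matrix.vecMulVec (X ω) (X ω)) ^ 2) := by
  have hX4' : MemLp X 4 μ := memLp_four_of_integrable_trace_vecMulVec_sq hX.aestronglyMeasurable hX4
  have hZ4 : MemLp Z 4 μ := memLp_of_map_eq_pi_gaussianReal hZ (by norm_num) hZlaw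
  have hobs : Measurable (obs X Z snr) := by unfold obs; fun_prop
  exact derivative_mmse_fourth_moment_bound_general hobs hX4' hZ4 hsnr.le

end
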